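/- arXiv:1808.01553 — 2 statements merged into one kernel-verified Lean document; each statement's English description precedes it below -/
import Mathlib

section
/- Let a > 0. The function A_{0,0} is twice differentiable on (-a, +∞), and for every r ∈ (-a, +∞) it satisfies the second-order linear differential equation (a²-r²)·A_{0,0}''(r) - 5r·A_{0,0}'(r) - 3·A_{0,0}(r) = 0. -/
open Real Filter Set

/-- `A_{0,0}(r) = ∫_{-π/2}^{π/2} dθ / (r cos θ + a)²`. -/
noncomputable def A00 (a : ℝ) (r : ℝ) : ℝ :=
  ∫ θ in (-(π/2))..(π/2), 1 / (r * cos θ + a) ^ 2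

/-!
Differentiation under the integral sign gives
`A₀₀' = ∫ -2 cos θ / D³` and `A₀₀'' = ∫ 6 cos² θ / D⁴` with `D = r cos θ + a`
(`hasDerivAt_integral_cos_pow_div`). The combination
`(a² - r²) A₀₀'' - 5 r A₀₀' - 3 A₀₀` then has as integrand the exact `θ`-derivative of
`sin θ cos θ (3 a + r cos θ) / D³` (`hasDerivAt_primitive`), which vanishes at `θ = ±π/2`,
so the combination is zero.
-/

lemma mem_Icc_of_mem_uIoc {θ : ℝ} (h : θ ∈ Set.uIoc (-(π/2)) (π/2)) : θ ∈ Icc (-(π/2)) (π/2) := by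
  rw [uIoc_of_le (by linarith [pi_pos])] at h
  exact Ioc_subset_Icc_self h

lemma denom_pos {a r θ : ℝ} (ha : 0 < a) (hr : -a < r) (hθ : θ ∈ Icc (-(π/2)) (π/2)) :
    0 < r * cos θ + a := by
  have h0 := cos_nonneg_of_mem_Icc hθ
  have h1 := cos_le_one θ
  rcases le_or_gt 0 r with h | h
  · positivity
  · nlinarith

lemma intervalIntegrable_cos_pow_div {a r : ℝ} (ha : 0 < a) (hr : -a < r) (k n : ℕ) :
    IntervalIntegrable (fun θ => cos θ ^ k / (r * cos θ + a) ^ n) MeasureTheory.volume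
      (-(π/2)) (π/2) := by
  apply ContinuousOn.intervalIntegrable
  rw [uIcc_of_le (by linarith [pi_pos])]
  exact ContinuousOn.div (by fun_prop) (by fun_prop)
    fun θ hθ => (pow_pos (denom_pos ha hr hθ) n).ne'

lemma hasDerivAt_integral_cos_pow_div {a r : ℝ} (ha : 0 < a) (hr : -a < r) (k n : ℕ) :
    HasDerivAt (fun r => ∫ θ in (-(π/2))..(π/2), cos θ ^ k / (r * cos θ + a) ^ n)
      (-n * ∫ θ in (-(π/2))..(π/2), cos θ ^ (k + 1) / (r * cos θ + a) ^ (n + 1)) r := by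
  -- For `x > m` with `-a < m ≤ 0`, the denominator is at least `m + a > 0`, as `0 ≤ cos θ ≤ 1`.
  obtain ⟨m, hma, hmr, hm0⟩ : ∃ m, -a < m ∧ m < r ∧ m ≤ 0 := by
    obtain ⟨m, h1, h2⟩ := exists_between (lt_min hr (neg_lt_zero.mpr ha))
    exact ⟨m, h1, h2.trans_le (min_le_left _ _), (h2.trans_le (min_le_right _ _)).le⟩
  rw [← intervalIntegral.integral_const_mul]
  refine (intervalIntegral.hasDerivAt_integral_of_dominated_loc_of_deriv_le
    (F := fun x θ => cos θ ^ k / (x * cos θ + a) ^ n)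
    (F' := fun x θ => -n * (cos θ ^ (k + 1) / (x * cos θ + a) ^ (n + 1)))
    (bound := fun _ => n * (1 / (m + a) ^ (n + 1)))
    (Ioi_mem_nhds hmr) ?_ (intervalIntegrable_cos_pow_div ha hr k n) ?_ ?_ (by simp) ?_).2
  · exact .of_forall fun x => (by fun_prop : Measurable _).aestronglyMeasurable
  · exact (by fun_prop : Measurable _).aestronglyMeasurable
  · refine .of_forall fun θ hθ x hx => ?_
    have hI := mem_Icc_of_mem_uIoc hθ
    have h0 := cos_nonneg_of_mem_Icc hI
    have h1 := cos_le_one θ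
    have hD := denom_pos ha (hma.trans hx) hI
    have hδ : 0 < m + a := by linarith
    have hle : m + a ≤ x * cos θ + a := by
      have : m < x := hx
      nlinarith
    rw [norm_mul, norm_neg, Real.norm_natCast, Real.norm_of_nonneg (by positivity)]
    gcongr
    exact pow_le_one₀ h0 h1
  · refine .of_forall fun θ hθ x hx => ?_
    have hD := denom_pos ha (hma.trans hx) (mem_Icc_of_mem_uIoc hθ)
    have h := ((((hasDerivAt_id x).mul_const (cos θ)).add_const a).pow n).inv
      (pow_pos hD n).ne' |>.const_mul (cos θ ^ k)
    simp only [id] at h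
    refine h.congr_deriv ?_
    rcases n with _ | n
    · simp
    · simp only [Nat.add_sub_cancel, Pi.pow_apply]
      field_simp
      ring

lemma hasDerivAt_A00 {a r : ℝ} (ha : 0 < a) (hr : -a < r) :
    HasDerivAt (A00 a) (-2 * ∫ θ in (-(π/2))..(π/2), cos θ ^ 1 / (r * cos θ + a) ^ 3) r := by
  have hA : A00 a = fun r => ∫ θ in (-(π/2))..(π/2), cos θ ^ 0 / (r * cos θ + a) ^ 2 := by
    funext x
    simp [A00]
  rw [hA]
  exact_mod_cast hasDerivAt_integral_cos_pow_div ha hr 0 2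

lemma hasDerivAt_deriv_A00 {a r : ℝ} (ha : 0 < a) (hr : -a < r) :
    HasDerivAt (deriv (A00 a))
      (6 * ∫ θ in (-(π/2))..(π/2), cos θ ^ 2 / (r * cos θ + a) ^ 4) r := by
  have h := (hasDerivAt_integral_cos_pow_div ha hr 1 3).const_mul (-2)
  refine (h.congr_of_eventuallyEq ?_).congr_deriv (by push_cast; ring)
  filter_upwards [Ioi_mem_nhds hr] with x hx
  exact (hasDerivAt_A00 ha hx).deriv

/-- The primitive is found by seeking `sin θ · P(cos θ) / D³` with `P` a quadratic polynomial and
`P(0) = 0`; comparing coefficients of powers of `cos θ` forces `P(c) = 3 a c + r c²`. -/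
lemma hasDerivAt_primitive {a r θ : ℝ} (hD : r * cos θ + a ≠ 0) :
    HasDerivAt (fun θ => sin θ * (cos θ * (3 * a + r * cos θ)) / (r * cos θ + a) ^ 3)
      ((a ^ 2 - r ^ 2) * (6 * (cos θ ^ 2 / (r * cos θ + a) ^ 4))
        - 5 * r * (-2 * (cos θ ^ 1 / (r * cos θ + a) ^ 3))
        - 3 * (cos θ ^ 0 / (r * cos θ + a) ^ 2)) θ := by
  have hc := hasDerivAt_cos θ
  have h := ((hasDerivAt_sin θ).mul (hc.mul ((hc.const_mul r).const_add (3 * a)))).div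
    (((hc.const_mul r).add_const a).pow 3) (pow_ne_zero 3 hD)
  refine h.congr_deriv ?_
  simp only [Pi.mul_apply, Pi.pow_apply]
  have hs : sin θ ^ 2 = 1 - cos θ ^ 2 := sin_sq θ
  generalize sin θ = s at hs ⊢
  generalize cos θ = c at hs hD ⊢
  -- Eliminating `a` makes the denominator an atom `D`, leaving a polynomial identity modulo `hs`.
  obtain ⟨D, rfl⟩ : ∃ D, a = D - r * c := ⟨r * c + a, by ring⟩
  rw [add_sub_cancel] at hD ⊢
  simp only [Nat.add_one_sub_one, Nat.cast_ofNat]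
  field_simp
  ring_nf
  simp only [hs]
  ring

/-- Equation (3.16): for `a > 0`, `A_{0,0}` is twice differentiable on `(-a, +∞)` and
satisfies `(a²-r²)A₀₀''(r) - 5r·A₀₀'(r) - 3A₀₀(r) = 0` there. -/
theorem stmt10 (a : ℝ) (ha : 0 < a) :
    (∀ r ∈ Set.Ioi (-a), DifferentiableAt ℝ (A00 a) r) ∧
    (∀ r ∈ Set.Ioi (-a), DifferentiableAt ℝ (deriv (A00 a)) r) ∧
    (∀ r ∈ Set.Ioi (-a),
      (a ^ 2 - r ^ 2) * deriv (deriv (A00 a)) r - 5 * r * deriv (A00 a) r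
        - 3 * A00 a r = 0) := by
  refine ⟨fun r hr => (hasDerivAt_A00 ha hr).differentiableAt,
    fun r hr => (hasDerivAt_deriv_A00 ha hr).differentiableAt, fun r hr => ?_⟩
  have h0 : A00 a r = ∫ θ in (-(π/2))..(π/2), cos θ ^ 0 / (r * cos θ + a) ^ 2 := by
    simp [A00]
  rw [(hasDerivAt_deriv_A00 ha hr).deriv, (hasDerivAt_A00 ha hr).deriv, h0]
  have i2 := (((intervalIntegrable_cos_pow_div ha hr 2 4).const_mul 6).const_mul (a ^ 2 - r ^ 2))
  have i1 := (((intervalIntegrable_cos_pow_div ha hr 1 3).const_mul (-2)).const_mul (5 * r))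
  have i0 := ((intervalIntegrable_cos_pow_div ha hr 0 2).const_mul 3)
  have key := intervalIntegral.integral_eq_sub_of_hasDerivAt
    (fun θ hθ => hasDerivAt_primitive (a := a) (r := r) (θ := θ) (denom_pos ha hr
      (by rwa [uIcc_of_le (by linarith [pi_pos])] at hθ)).ne') ((i2.sub i1).sub i0)
  rw [intervalIntegral.integral_sub (i2.sub i1) i0, intervalIntegral.integral_sub i2 i1] at key
  simp only [intervalIntegral.integral_const_mul] at key
  rw [key]
  simp
end

section
/- Let a > 0 and b > 0. Then: (i) (r+a)^{3/2}·A_{0,0}(r) → π/√(2a) as r → -a from the right; (ii) r·A_{0,0}(r) → 2/a as r → +∞; (iii) (b-r)^{3/2}·B_{0,0}(r) → π/√(2b) as r → b from the left; and (iv) |r|·B_{0,0}(r) → 2/b as r → -∞. -/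
/-!
Only the first two limits need work: the substitution `θ ↦ θ + π` gives `B00 b r = A00 b (-r)`,
which turns the last two limits into the first two.

Since the integrand is even, `A00 a r` is twice the integral over `[0, π/2]`. Each asymptotic comes
from rescaling `θ` around the point where the integral concentrates and applying dominated
convergence.

* As `r → -a⁺` the mass sits at `θ = 0`. With `s = √(r + a)` and `θ = s u`,
  the integral becomes `s⁻³ ∫ du / (1 + (a - s²) (1 - cos (s u)) / s²)²` over `[0, π / (2 s)]`,
  whose integrand tends to `1 / (1 + a u² / 2)²` and is dominated, by `1 - cos x ≥ 2 x² / π²`,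
  by `1 / (1 + a u² / π²)²`.
* As `r → +∞` the mass sits at `θ = π/2`. With `θ = π/2 - u / r` the integral becomes
  `r⁻¹ ∫ du / (r sin (u / r) + a)²` over `[0, r π / 2]`, whose integrand tends to `1 / (u + a)²` and
  is dominated, by `sin x ≥ 2 x / π`, by `1 / (2 u / π + a)²`.

The limiting integrals have elementary primitives.
-/

open Real Filter Set Topology

/-- `B_{0,0}(r) = ∫_{π/2}^{3π/2} dθ / (r cos θ + b)²`. -/
noncomputable def B00 (b : ℝ) (r : ℝ) : ℝ :=
  ∫ θ in (π/2)..(3*π/2), 1 / (r * cos θ + b) ^ 2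

open MeasureTheory

/-- Dominated convergence for integrals over intervals `[0, R n]` that exhaust the half-line. -/
lemma tendsto_integral_zero_to {l : Filter ℝ} [l.IsCountablyGenerated] {R : ℝ → ℝ}
    {F : ℝ → ℝ → ℝ} {f g : ℝ → ℝ} (hR : Tendsto R l atTop)
    (hF : ∀ n, Measurable (F n)) (hg0 : ∀ u, 0 ≤ g u) (hg : IntegrableOn g (Ioi 0))
    (hb : ∀ᶠ n in l, ∀ u, 0 < u → u ≤ R n → |F n u| ≤ g u)
    (hlim : ∀ u, 0 < u → Tendsto (fun n => F n u) l (𝓝 (f u))) :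
    Tendsto (fun n => ∫ u in (0:ℝ)..(R n), F n u) l (𝓝 (∫ u in Ioi 0, f u)) := by
  have key : Tendsto (fun n => ∫ u in Ioi (0:ℝ), (Iic (R n)).indicator (F n) u) l
      (𝓝 (∫ u in Ioi 0, f u)) := by
    refine tendsto_integral_filter_of_dominated_convergence g ?_ ?_ hg ?_
    · exact Eventually.of_forall fun n =>
        ((hF n).indicator measurableSet_Iic).aestronglyMeasurable
    · filter_upwards [hb] with n hn
      refine (ae_restrict_iff' measurableSet_Ioi).2 (Eventually.of_forall fun u hu => ?_)
      by_cases h : u ≤ R n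
      · rw [indicator_of_mem (show u ∈ Iic (R n) from h)]
        exact hn u hu h
      · rw [indicator_of_notMem (show u ∉ Iic (R n) from h), norm_zero]
        exact hg0 u
    · refine (ae_restrict_iff' measurableSet_Ioi).2 (Eventually.of_forall fun u hu => ?_)
      refine (hlim u hu).congr' ?_
      filter_upwards [hR.eventually_ge_atTop u] with n hn
      rw [indicator_of_mem (show u ∈ Iic (R n) from hn)]
  refine key.congr' ?_
  filter_upwards [hR.eventually_ge_atTop 0] with n hn
  rw [intervalIntegral.integral_of_le hn, setIntegral_indicator measurableSet_Iic, Ioi_inter_Iic]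

lemma tendsto_div_one_add_sq : Tendsto (fun y : ℝ => y / (1 + y ^ 2)) atTop (𝓝 0) := by
  refine tendsto_of_tendsto_of_tendsto_of_le_of_le' tendsto_const_nhds tendsto_inv_atTop_zero
    ?_ ?_
  · filter_upwards [eventually_gt_atTop 0] with y hy
    positivity
  · filter_upwards [eventually_gt_atTop 0] with y hy
    rw [inv_eq_one_div, div_le_div_iff₀ (by positivity) hy]
    nlinarith

lemma hasDerivAt_primitive_sq {k : ℝ} (hk : 0 < k) (u : ℝ) :
    HasDerivAt (fun u : ℝ => (k * u / (1 + (k * u) ^ 2) + arctan (k * u)) / (2 * k))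
      (1 / (1 + (k * u) ^ 2) ^ 2) u := by
  have h1 : HasDerivAt (fun u : ℝ => k * u) k u := by simpa using (hasDerivAt_id u).const_mul k
  have hp : 1 + (k * u) ^ 2 ≠ 0 := by positivity
  have h2 : HasDerivAt (fun u : ℝ => 1 + (k * u) ^ 2) (2 * (k * u) * k) u := by
    simpa using (h1.pow 2).const_add 1
  convert! ((h1.div h2 hp).add h1.arctan).div_const (2 * k) using 1
  field_simp
  ring

lemma tendsto_primitive_sq {k : ℝ} (hk : 0 < k) :
    Tendsto (fun u : ℝ => (k * u / (1 + (k * u) ^ 2) + arctan (k * u)) / (2 * k)) atTop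
      (𝓝 (π / (4 * k))) := by
  have h1 : Tendsto (fun u : ℝ => k * u) atTop atTop := tendsto_id.const_mul_atTop hk
  have h2 := ((tendsto_div_one_add_sq.comp h1).add
    ((tendsto_nhds_of_tendsto_nhdsWithin tendsto_arctan_atTop).comp h1)).div_const (2 * k)
  convert! h2 using 2
  field_simp
  ring

lemma integrableOn_sq {k : ℝ} (hk : 0 < k) :
    IntegrableOn (fun u : ℝ => 1 / (1 + (k * u) ^ 2) ^ 2) (Ioi 0) :=
  integrableOn_Ioi_deriv_of_nonneg' (fun u _ => hasDerivAt_primitive_sq hk u)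
    (fun u _ => by positivity) (tendsto_primitive_sq hk)

lemma integral_sq {k : ℝ} (hk : 0 < k) :
    ∫ u in Ioi (0:ℝ), 1 / (1 + (k * u) ^ 2) ^ 2 = π / (4 * k) := by
  rw [integral_Ioi_of_hasDerivAt_of_nonneg' (fun u _ => hasDerivAt_primitive_sq hk u)
    (fun u _ => by positivity) (tendsto_primitive_sq hk)]
  simp

lemma hasDerivAt_primitive_lin {a c : ℝ} (ha : 0 < a) (hc : 0 < c) {u : ℝ} (hu : 0 ≤ u) :
    HasDerivAt (fun u : ℝ => -(c * u + a)⁻¹ / c) (1 / (c * u + a) ^ 2) u := by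
  have hp : c * u + a ≠ 0 := by positivity
  have h1 : HasDerivAt (fun u : ℝ => c * u + a) c u := by
    simpa using ((hasDerivAt_id u).const_mul c).add_const a
  convert! (h1.inv hp).neg.div_const c using 1
  field_simp

lemma tendsto_primitive_lin (a : ℝ) {c : ℝ} (hc : 0 < c) :
    Tendsto (fun u : ℝ => -(c * u + a)⁻¹ / c) atTop (𝓝 0) := by
  have h1 : Tendsto (fun u : ℝ => c * u + a) atTop atTop :=
    tendsto_atTop_add_const_right _ _ (tendsto_id.const_mul_atTop hc)
  simpa using (tendsto_inv_atTop_zero.comp h1).neg.div_const c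

lemma integrableOn_lin {a c : ℝ} (ha : 0 < a) (hc : 0 < c) :
    IntegrableOn (fun u : ℝ => 1 / (c * u + a) ^ 2) (Ioi 0) :=
  integrableOn_Ioi_deriv_of_nonneg' (fun _ hu => hasDerivAt_primitive_lin ha hc hu)
    (fun u _ => by positivity) (tendsto_primitive_lin a hc)

lemma integral_lin {a : ℝ} (ha : 0 < a) :
    ∫ u in Ioi (0:ℝ), 1 / (u + a) ^ 2 = 1 / a := by
  have h := integral_Ioi_of_hasDerivAt_of_nonneg'
    (fun _ hu => hasDerivAt_primitive_lin ha one_pos hu)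
    (fun u _ => by positivity) (tendsto_primitive_lin a one_pos)
  simpa using h

lemma A00_eq_two_mul {a r : ℝ} (ha : 0 < a) (hr : -a < r) :
    A00 a r = 2 * ∫ θ in (0:ℝ)..(π/2), 1 / (r * cos θ + a) ^ 2 := by
  have hcont : ContinuousOn (fun θ : ℝ => 1 / (r * cos θ + a) ^ 2) (Icc (-(π/2)) (π/2)) := by
    refine ContinuousOn.div (by fun_prop) (by fun_prop) fun θ hθ => ?_
    have h0 := cos_nonneg_of_mem_Icc hθ
    have h1 := cos_le_one θ
    have : 0 < r * cos θ + a := by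
      rcases h0.eq_or_lt with h | h
      · rw [← h]; simpa using ha
      · nlinarith
    positivity
  have hpi := pi_pos
  have hi : ∀ x y : ℝ, x ∈ Icc (-(π/2)) (π/2) → y ∈ Icc (-(π/2)) (π/2) →
      IntervalIntegrable (fun θ : ℝ => 1 / (r * cos θ + a) ^ 2) volume x y := fun x y hx hy =>
    (hcont.mono (uIcc_subset_Icc hx hy)).intervalIntegrable
  have hz : (0:ℝ) ∈ Icc (-(π/2)) (π/2) := ⟨by linarith, by linarith⟩
  rw [A00, ← intervalIntegral.integral_add_adjacent_intervals
    (hi (-(π/2)) 0 (left_mem_Icc.2 (by linarith)) hz)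
    (hi 0 (π/2) hz (right_mem_Icc.2 (by linarith))), two_mul]
  congr 1
  have := intervalIntegral.integral_comp_neg (a := 0) (b := π/2)
    (fun θ : ℝ => 1 / (r * cos θ + a) ^ 2)
  simpa using this.symm

lemma one_sub_cos_eq (x : ℝ) : 1 - cos x = x ^ 2 / 2 * sinc (x / 2) ^ 2 := by
  rcases eq_or_ne x 0 with rfl | hx
  · simp
  · rw [sinc_of_ne_zero (by simpa using hx)]
    have h := sin_sq_eq_half_sub (x / 2)
    rw [mul_div_cancel₀ x two_ne_zero] at h
    rw [div_pow, h]
    field_simp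

/-- The limit at `-a` in the variable `s = √(r + a)`. -/
lemma tendsto_scaled_zero {a : ℝ} (ha : 0 < a) :
    Tendsto (fun s : ℝ => s ^ 3 * A00 a (s ^ 2 - a)) (𝓝[>] 0) (𝓝 (π / Real.sqrt (2 * a))) := by
  have hpi := pi_pos
  set F : ℝ → ℝ → ℝ := fun s u =>
    1 / (1 + (a - s ^ 2) * (u ^ 2 / 2 * sinc (s * u / 2) ^ 2)) ^ 2 with hFdef
  have hk : 0 < √a / π := by positivity
  have hk2 : 0 < √(a / 2) := by positivity
  have hmain : Tendsto (fun s : ℝ => ∫ u in (0:ℝ)..(π / 2 / s), F s u) (𝓝[>] 0)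
      (𝓝 (∫ u in Ioi (0:ℝ), 1 / (1 + (√(a / 2) * u) ^ 2) ^ 2)) := by
    refine tendsto_integral_zero_to (g := fun u => 1 / (1 + (√a / π * u) ^ 2) ^ 2)
      ?_ ?_ (fun u => by positivity) (integrableOn_sq hk) ?_ ?_
    · exact tendsto_inv_nhdsGT_zero.const_mul_atTop (by positivity)
    · intro s
      have := measurable_sinc
      fun_prop
    · have hlt : ∀ᶠ s : ℝ in 𝓝[>] 0, s ^ 2 < a / 2 := by
        refine eventually_nhdsWithin_of_eventually_nhds ?_
        exact (show ContinuousAt (fun s : ℝ => s ^ 2) 0 by fun_prop).eventually_lt_const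
          (by simpa using ha)
      filter_upwards [hlt, self_mem_nhdsWithin] with s hs hs0 u hu huR
      have hs0 : 0 < s := hs0
      have hsu : s * u ≤ π / 2 := by
        rw [le_div_iff₀ hs0] at huR
        linarith
      have hcos := cos_le_one_sub_mul_cos_sq (x := s * u)
        (by rw [abs_of_pos (by positivity)]; linarith)
      have hc := one_sub_cos_eq (s * u)
      -- Jordan's inequality, after cancelling the factor `s²`.
      have hJ : 2 / π ^ 2 * u ^ 2 ≤ u ^ 2 / 2 * sinc (s * u / 2) ^ 2 := by
        have : s ^ 2 * (2 / π ^ 2 * u ^ 2) ≤ s ^ 2 * (u ^ 2 / 2 * sinc (s * u / 2) ^ 2) := by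
          nlinarith
        exact le_of_mul_le_mul_left this (by positivity)
      have hX : (√a / π * u) ^ 2 ≤ (a - s ^ 2) * (u ^ 2 / 2 * sinc (s * u / 2) ^ 2) := by
        calc (√a / π * u) ^ 2 = a / 2 * (2 / π ^ 2 * u ^ 2) := by
              rw [mul_pow, div_pow, sq_sqrt ha.le]; ring
          _ ≤ _ := by gcongr <;> linarith
      rw [abs_of_nonneg (by simp only [hFdef]; positivity)]
      simp only [hFdef]
      gcongr
    · intro u _
      have hc : ContinuousAt (fun s => F s u) 0 := by
        have := continuous_sinc
        refine ContinuousAt.div (by fun_prop) (by fun_prop) ?_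
        have : 0 ≤ (a - 0 ^ 2) * (u ^ 2 / 2 * sinc (0 * u / 2) ^ 2) := by
          simp only [zero_pow two_ne_zero, sub_zero]; positivity
        positivity
      have h := hc.tendsto.mono_left (nhdsWithin_le_nhds (s := Ioi 0))
      convert h using 2
      simp only [hFdef, zero_mul, zero_div, sinc_zero, mul_pow, sq_sqrt (by positivity : 0 ≤ a / 2)]
      ring
  have h2 := hmain.const_mul 2
  rw [integral_sq hk2] at h2
  have hval : 2 * (π / (4 * √(a / 2))) = π / √(2 * a) := by
    have : √(2 * a) = 2 * √(a / 2) := by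
      rw [show 2 * a = 2 ^ 2 * (a / 2) by ring, sqrt_mul (by positivity),
        sqrt_sq (by positivity)]
    rw [this]
    field_simp
    norm_num
  rw [hval] at h2
  refine h2.congr' ?_
  filter_upwards [self_mem_nhdsWithin] with s hs0
  have hs0 : 0 < s := hs0
  rw [A00_eq_two_mul ha (by nlinarith [sq_pos_of_pos hs0])]
  have hsub := intervalIntegral.mul_integral_comp_mul_left (a := 0) (b := π / 2 / s)
    (f := fun θ : ℝ => 1 / ((s ^ 2 - a) * cos θ + a) ^ 2) s
  rw [mul_zero, mul_div_cancel₀ _ hs0.ne'] at hsub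
  rw [← hsub]
  have : ∀ u, F s u = s ^ 4 * (1 / ((s ^ 2 - a) * cos (s * u) + a) ^ 2) := by
    intro u
    have hc := one_sub_cos_eq (s * u)
    have : (s ^ 2 - a) * cos (s * u) + a
        = s ^ 2 * (1 + (a - s ^ 2) * (u ^ 2 / 2 * sinc (s * u / 2) ^ 2)) := by
      linear_combination (a - s ^ 2) * hc
    rw [this, mul_pow, show (s ^ 2) ^ 2 = s ^ 4 by ring]
    simp only [hFdef, one_div, mul_inv]
    rw [mul_inv_cancel_left₀ (by positivity)]
  simp only [this, intervalIntegral.integral_const_mul]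
  ring

lemma tendsto_A00_neg {a : ℝ} (ha : 0 < a) :
    Tendsto (fun r : ℝ => (r + a) ^ ((3:ℝ)/2) * A00 a r) (𝓝[>] (-a))
      (𝓝 (π / Real.sqrt (2 * a))) := by
  have hs : Tendsto (fun r : ℝ => √(r + a)) (𝓝[>] (-a)) (𝓝[>] 0) := by
    refine tendsto_nhdsWithin_iff.2 ⟨?_, ?_⟩
    · have : ContinuousAt (fun r : ℝ => √(r + a)) (-a) := by fun_prop
      simpa using this.tendsto.mono_left nhdsWithin_le_nhds
    · filter_upwards [self_mem_nhdsWithin] with r hr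
      have hr : -a < r := hr
      exact sqrt_pos.2 (by linarith)
  refine ((tendsto_scaled_zero ha).comp hs).congr' ?_
  filter_upwards [self_mem_nhdsWithin] with r hr
  have hr : -a < r := hr
  have h0 : 0 ≤ r + a := by linarith
  simp only [Function.comp, sq_sqrt h0, add_sub_cancel_right]
  rw [sqrt_eq_rpow, ← rpow_natCast, ← rpow_mul h0]
  norm_num

lemma tendsto_A00_atTop {a : ℝ} (ha : 0 < a) :
    Tendsto (fun r : ℝ => r * A00 a r) atTop (𝓝 (2 / a)) := by
  have hpi := pi_pos
  have hmain : Tendsto (fun r : ℝ => ∫ u in (0:ℝ)..(r * (π / 2)), 1 / (r * sin (u / r) + a) ^ 2)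
      atTop (𝓝 (∫ u in Ioi (0:ℝ), 1 / (u + a) ^ 2)) := by
    refine tendsto_integral_zero_to (g := fun u => 1 / (2 / π * u + a) ^ 2)
      ?_ ?_ (fun u => by positivity) (integrableOn_lin ha (by positivity)) ?_ ?_
    · exact tendsto_id.atTop_mul_const (by positivity)
    · intro r
      fun_prop
    · filter_upwards [eventually_gt_atTop 0] with r hr u hu huR
      have h := mul_le_sin (x := u / r) (by positivity)
        (by rw [div_le_iff₀ hr]; linarith)
      have h' : 2 / π * u ≤ r * sin (u / r) := by
        calc 2 / π * u = r * (2 / π * (u / r)) := by field_simp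
          _ ≤ _ := by gcongr
      rw [abs_of_nonneg (by positivity)]
      gcongr
    · intro u hu
      have h0 : Tendsto (fun r : ℝ => u / r) atTop (𝓝 0) := tendsto_id.const_div_atTop u
      have h1 : Tendsto (fun r : ℝ => sinc (u / r)) atTop (𝓝 1) := by
        have h := (continuous_sinc.tendsto 0).comp h0
        rwa [sinc_zero] at h
      have h2 : Tendsto (fun r : ℝ => 1 / (u * sinc (u / r) + a) ^ 2) atTop
          (𝓝 (1 / (u + a) ^ 2)) := by
        have h3 := ((h1.const_mul u).add_const a).pow 2
        rw [mul_one] at h3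
        exact tendsto_const_nhds.div h3 (by positivity)
      refine h2.congr' ?_
      filter_upwards [eventually_gt_atTop 0] with r hr
      rw [sinc_of_ne_zero (by positivity)]
      congr 3
      field_simp
  have h2 := hmain.const_mul 2
  rw [integral_lin ha, mul_one_div] at h2
  refine h2.congr' ?_
  filter_upwards [eventually_gt_atTop 0] with r hr
  rw [A00_eq_two_mul ha (by linarith)]
  have hsub := intervalIntegral.mul_integral_comp_mul_left (a := 0) (b := π / 2)
    (f := fun u : ℝ => 1 / (r * sin (u / r) + a) ^ 2) r
  have hrefl := intervalIntegral.integral_comp_sub_left (a := 0) (b := π / 2)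
    (fun θ : ℝ => 1 / (r * cos θ + a) ^ 2) (π / 2)
  simp only [cos_pi_div_two_sub, sub_self, sub_zero] at hrefl
  simp only [mul_zero, mul_div_cancel_left₀ _ hr.ne'] at hsub
  rw [← hsub, hrefl]
  ring

lemma B00_eq_A00_neg (b r : ℝ) : B00 b r = A00 b (-r) := by
  have h := intervalIntegral.integral_comp_add_right (a := -(π/2)) (b := π/2)
    (fun θ : ℝ => 1 / (r * cos θ + b) ^ 2) π
  rw [show -(π/2) + π = π/2 by ring, show π/2 + π = 3*π/2 by ring] at h
  rw [B00, A00, ← h]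
  simp only [cos_add_pi, mul_neg, neg_mul]

/-- Lemma 3.5: for `a, b > 0`,
`A₀₀(r) ~ π/(√(2a)(r+a)^{3/2})` as `r → -a⁺`, `A₀₀(r) ~ 2/(ar)` as `r → +∞`,
`B₀₀(r) ~ π/(√(2b)(b-r)^{3/2})` as `r → b⁻`, and `B₀₀(r) ~ 2/(b|r|)` as `r → -∞`. -/
theorem stmt12 (a b : ℝ) (ha : 0 < a) (hb : 0 < b) :
    Tendsto (fun r : ℝ => (r + a) ^ ((3:ℝ)/2) * A00 a r) (𝓝[>] (-a))
      (𝓝 (π / Real.sqrt (2 * a))) ∧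
    Tendsto (fun r : ℝ => r * A00 a r) atTop (𝓝 (2 / a)) ∧
    Tendsto (fun r : ℝ => (b - r) ^ ((3:ℝ)/2) * B00 b r) (𝓝[<] b)
      (𝓝 (π / Real.sqrt (2 * b))) ∧
    Tendsto (fun r : ℝ => |r| * B00 b r) atBot (𝓝 (2 / b)) := by
  refine ⟨tendsto_A00_neg ha, tendsto_A00_atTop ha, ?_, ?_⟩
  · have hneg : Tendsto (fun r : ℝ => -r) (𝓝[<] b) (𝓝[>] (-b)) := tendsto_neg_nhdsLT
    refine ((tendsto_A00_neg hb).comp hneg).congr fun r => ?_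
    simp only [Function.comp, B00_eq_A00_neg]
    rw [neg_add_eq_sub]
  · refine ((tendsto_A00_atTop hb).comp tendsto_neg_atBot_atTop).congr' ?_
    filter_upwards [eventually_lt_atBot 0] with r hr
    simp only [Function.comp, B00_eq_A00_neg, abs_of_neg hr]
end
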